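/- Let θ ∈ (π/3, π), α = (π−θ)/2, and let x_θ, y_θ : [0,1] → ℝ be the coordinate functions of the generalized dragon curve 𝒟_θ (uniform limits of the piecewise-linear approximants determined by the paperfolding substitution with angle α and contraction ratio 1/(2 cos α)). Then the box-counting dimensions of the graphs X_θ = {(t, x_θ(t)) : t ∈ [0,1]} and Y_θ = {(t, y_θ(t)) : t ∈ [0,1]} both exist and equal 1 − log(cos α)/log 2. -/

import Mathlib

open Real Filter

noncomputable def dragonAngle (α : ℝ) : ℕ → ℕ → ℝ
  | 0, _ => 0
  | k+1, i => dragonAngle α k (i / 2) + (if (i / 2) % 2 = i % 2 then α else -α)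

noncomputable def fcoef (α : ℝ) (k i : ℕ) : ℝ :=
  Real.cos (dragonAngle α k i) / (2 * Real.cos α) ^ k

noncomputable def gcoef (α : ℝ) (k i : ℕ) : ℝ :=
  Real.sin (dragonAngle α k i) / (2 * Real.cos α) ^ k

noncomputable def xfun (α : ℝ) (k : ℕ) (t : ℝ) : ℝ :=
  (∑ i ∈ Finset.range (min ⌊t * 2 ^ k⌋₊ (2 ^ k - 1)), fcoef α k i) +
    2 ^ k * fcoef α k (min ⌊t * 2 ^ k⌋₊ (2 ^ k - 1)) *
      (t - (min ⌊t * 2 ^ k⌋₊ (2 ^ k - 1) : ℕ) / 2 ^ k)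

noncomputable def yfun (α : ℝ) (k : ℕ) (t : ℝ) : ℝ :=
  (∑ i ∈ Finset.range (min ⌊t * 2 ^ k⌋₊ (2 ^ k - 1)), gcoef α k i) +
    2 ^ k * gcoef α k (min ⌊t * 2 ^ k⌋₊ (2 ^ k - 1)) *
      (t - (min ⌊t * 2 ^ k⌋₊ (2 ^ k - 1) : ℕ) / 2 ^ k)

noncomputable def meshCountδ (Z : Set (ℝ × ℝ)) (δ : ℝ) : ℕ :=
  Nat.card {p : ℤ × ℤ |
    (Z ∩ (Set.Icc ((p.1 : ℝ) * δ) (((p.1 : ℝ) + 1) * δ) ×ˢ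
          Set.Icc ((p.2 : ℝ) * δ) (((p.2 : ℝ) + 1) * δ))).Nonempty}


/-- Partial sums. -/
noncomputable def psum (a : ℕ → ℕ → ℝ) (k j : ℕ) : ℝ := ∑ i ∈ Finset.range j, a k i

noncomputable def gfun (a : ℕ → ℕ → ℝ) (k : ℕ) (t : ℝ) : ℝ :=
  (∑ i ∈ Finset.range (min ⌊t * 2 ^ k⌋₊ (2 ^ k - 1)), a k i) +
    2 ^ k * a k (min ⌊t * 2 ^ k⌋₊ (2 ^ k - 1)) *
      (t - (min ⌊t * 2 ^ k⌋₊ (2 ^ k - 1) : ℕ) / 2 ^ k)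

lemma psum_two_mul (a : ℕ → ℕ → ℝ) (h1 : ∀ k i, a (k+1) (2*i) + a (k+1) (2*i+1) = a k i)
    (k j : ℕ) : psum a (k+1) (2*j) = psum a k j := by
  unfold psum
  induction j with
  | zero => simp
  | succ j ih =>
    rw [show 2 * (j+1) = 2*j+1+1 by ring, Finset.sum_range_succ, Finset.sum_range_succ, ih,
      Finset.sum_range_succ, ← h1 k j]
    ring

lemma psum_pow_mul (a : ℕ → ℕ → ℝ) (h1 : ∀ k i, a (k+1) (2*i) + a (k+1) (2*i+1) = a k i)
    (k m j : ℕ) : psum a (k+m) (j * 2^m) = psum a k j := by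
  induction m with
  | zero => simp
  | succ m ih =>
    rw [← add_assoc, show j * 2^(m+1) = 2 * (j * 2^m) by ring, psum_two_mul a h1, ih]

lemma psum_succ (a : ℕ → ℕ → ℝ) (k j : ℕ) : psum a k (j+1) = psum a k j + a k j := by
  simp [psum, Finset.sum_range_succ]

lemma psum_near (a : ℕ → ℕ → ℝ) (q : ℝ) (hq : 0 < q) (h2 : ∀ k i, |a k i| ≤ q^k)
    (k i j : ℕ) (hij : i ≤ j) (hji : j ≤ i + 1) : |psum a k j - psum a k i| ≤ q^k := by
  have : j = i ∨ j = i + 1 := by omega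
  rcases this with rfl | rfl
  · simp; positivity
  · rw [psum_succ]; simpa using h2 k i

lemma step_near (a : ℕ → ℕ → ℝ) (q : ℝ) (hq : 0 < q) (hq1 : q < 1)
    (h1 : ∀ k i, a (k+1) (2*i) + a (k+1) (2*i+1) = a k i)
    (h2 : ∀ k i, |a k i| ≤ q^k) (k : ℕ) (t : ℝ) :
    dist (psum a k ⌊t * 2^k⌋₊) (psum a (k+1) ⌊t * 2^(k+1)⌋₊) ≤ 1 * q^k := by
  have e : ⌊t * 2^k⌋₊ = ⌊t * 2^(k+1)⌋₊ / 2 := by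
    rw [← Nat.floor_div_ofNat]
    congr 1
    rw [pow_succ]; field_simp
  rw [e, ← psum_two_mul a h1, dist_comm, Real.dist_eq, one_mul]
  refine (psum_near a q hq h2 _ _ _ (by omega) (by omega)).trans ?_
  exact pow_le_pow_of_le_one hq.le hq1.le (by omega)

lemma gfun_near (a : ℕ → ℕ → ℝ) (q : ℝ) (hq : 0 < q) 
    (h2 : ∀ k i, |a k i| ≤ q^k) (k : ℕ) (t : ℝ) (ht : t ∈ Set.Icc (0:ℝ) 1) :
    |psum a k ⌊t * 2^k⌋₊ - gfun a k t| ≤ 2 * q^k := by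
  have hB : (0:ℝ) < 2^k := by positivity
  have hN : 0 < 2^k := by positivity
  have ht0 : 0 ≤ t * 2^k := mul_nonneg ht.1 hB.le
  have hf : ⌊t * 2^k⌋₊ ≤ 2^k := by
    apply Nat.floor_le_of_le
    push_cast
    nlinarith [ht.2]
  set j := ⌊t * 2^k⌋₊ with hj
  have hj1 : (j:ℝ) ≤ t * 2^k := Nat.floor_le ht0
  have hj2 : t * 2^k < j + 1 := Nat.lt_floor_add_one _
  unfold gfun
  rw [← hj]
  set m := min j (2^k-1) with hm
  have hmj : m ≤ j := by omega
  have hjm : j ≤ m + 1 := by omega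
  have A := psum_near a q hq h2 k m j hmj hjm
  have e : (2:ℝ)^k * a k m * (t - m / 2^k) = a k m * (t * 2^k - m) := by
    field_simp
  rw [e]
  change |psum a k j - (psum a k m + _)| ≤ _
  have hmr : (m:ℝ) ≤ j := by exact_mod_cast hmj
  have b0 : 0 ≤ t * 2^k - m := by linarith
  have b1 : t * 2^k - m ≤ 1 := by
    rcases le_total j (2^k-1) with h | h
    · have : m = j := by omega
      rw [this]; linarith
    · have : m + 1 = 2^k := by omega
      have : (m:ℝ) + 1 = 2^k := by exact_mod_cast this
      nlinarith [ht.2]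
  have Bd : |a k m * (t * 2^k - m)| ≤ q^k := by
    rw [abs_mul, abs_of_nonneg b0]
    calc _ ≤ q^k * 1 := mul_le_mul (h2 k m) b1 b0 (by positivity)
      _ = _ := by ring
  rw [abs_le] at *
  constructor <;> linarith [A.1, A.2, Bd.1, Bd.2]

lemma tendsto_psum (a : ℕ → ℕ → ℝ) (q : ℝ) (hq : 0 < q) (hq1 : q < 1)
    (h2 : ∀ k i, |a k i| ≤ q^k) (x : ℝ → ℝ)
    (hx : TendstoUniformlyOn (fun k => gfun a k) x atTop (Set.Icc (0:ℝ) 1))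
    (t : ℝ) (ht : t ∈ Set.Icc (0:ℝ) 1) :
    Tendsto (fun k => psum a k ⌊t * 2^k⌋₊) atTop (nhds (x t)) := by
  have hp := hx.tendsto_at ht
  have h0 : Tendsto (fun k => psum a k ⌊t * 2^k⌋₊ - gfun a k t) atTop (nhds 0) := by
    apply squeeze_zero_norm (a := fun k => 2 * q^k)
    · intro k; exact gfun_near a q hq h2 k t ht
    · simpa using (tendsto_pow_atTop_nhds_zero_of_lt_one hq.le hq1).const_mul 2
  simpa using h0.add hp

lemma lim_holder (a : ℕ → ℕ → ℝ) (q : ℝ) (hq : 0 < q) (hq1 : q < 1)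
    (h1 : ∀ k i, a (k+1) (2*i) + a (k+1) (2*i+1) = a k i)
    (h2 : ∀ k i, |a k i| ≤ q^k) (x : ℝ → ℝ)
    (hx : TendstoUniformlyOn (fun k => gfun a k) x atTop (Set.Icc (0:ℝ) 1))
    (k : ℕ) (s t : ℝ) (hs : s ∈ Set.Icc (0:ℝ) 1) (ht : t ∈ Set.Icc (0:ℝ) 1)
    (hst : |s - t| ≤ 1 / 2^k) : |x s - x t| ≤ (2 / (1-q) + 1) * q^k := by
  wlog hle : s ≤ t generalizing s t
  · rw [abs_sub_comm]
    exact this t s ht hs (by rwa [abs_sub_comm]) (le_of_not_ge hle)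
  have As := dist_le_of_le_geometric_of_tendsto q 1 hq1
    (fun n => step_near a q hq hq1 h1 h2 n s) (tendsto_psum a q hq hq1 h2 x hx s hs) k
  have At := dist_le_of_le_geometric_of_tendsto q 1 hq1
    (fun n => step_near a q hq hq1 h1 h2 n t) (tendsto_psum a q hq hq1 h2 x hx t ht) k
  have hB : (0:ℝ) < 2^k := by positivity
  have hst2 : t * 2^k ≤ s * 2^k + 1 := by
    rw [abs_sub_comm, abs_of_nonneg (by linarith), le_div_iff₀ hB] at hst
    linarith
  have N := psum_near a q hq h2 k ⌊s * 2^k⌋₊ ⌊t * 2^k⌋₊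
    (Nat.floor_le_floor (by gcongr)) (by
      rw [← Nat.floor_add_one (mul_nonneg hs.1 hB.le)]
      exact Nat.floor_le_floor hst2)
  rw [Real.dist_eq] at As At
  have e : (2 / (1-q) + 1) * q^k = 1 * q^k/(1-q) + 1 * q^k/(1-q) + q^k := by ring
  rw [e]
  rw [abs_le] at *
  constructor <;> linarith [As.1, As.2, At.1, At.2, N.1, N.2]

lemma lim_dyadic (a : ℕ → ℕ → ℝ) (q : ℝ) (hq : 0 < q) (hq1 : q < 1)
    (h1 : ∀ k i, a (k+1) (2*i) + a (k+1) (2*i+1) = a k i)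
    (h2 : ∀ k i, |a k i| ≤ q^k) (x : ℝ → ℝ)
    (hx : TendstoUniformlyOn (fun k => gfun a k) x atTop (Set.Icc (0:ℝ) 1))
    (k j : ℕ) (hj : j ≤ 2^k) : x (j / 2^k) = psum a k j := by
  have hjr : (j:ℝ) ≤ 2^k := by exact_mod_cast hj
  have ht : (j / 2^k : ℝ) ∈ Set.Icc (0:ℝ) 1 :=
    ⟨by positivity, by rw [div_le_one (by positivity)]; exact hjr⟩
  have T := tendsto_psum a q hq hq1 h2 x hx _ ht
  refine tendsto_nhds_unique T (tendsto_const_nhds.congr' ?_)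
  filter_upwards [eventually_ge_atTop k] with n hn
  obtain ⟨m, rfl⟩ := Nat.exists_eq_add_of_le hn
  have : (j / 2^k : ℝ) * 2^(k+m) = ((j * 2^m : ℕ) : ℝ) := by
    push_cast; rw [pow_add]; field_simp
  rw [this, Nat.floor_natCast, psum_pow_mul a h1]

/-- Upper count -/
lemma count_upper (x : ℝ → ℝ) (C q : ℝ) (hC : 0 < C) (hq : 1/2 < q)
    (hH : ∀ (k : ℕ) (s t : ℝ), s ∈ Set.Icc (0:ℝ) 1 → t ∈ Set.Icc (0:ℝ) 1 →
      |s - t| ≤ 1/2^k → |x s - x t| ≤ C * q^k)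
    (k : ℕ) (δ : ℝ) (hδ0 : 1 / 2^(k+1) < δ) (hδ1 : δ ≤ 1/2^k) :
    {p : ℤ × ℤ | ({p : ℝ × ℝ | p.1 ∈ Set.Icc (0 : ℝ) 1 ∧ p.2 = x p.1} ∩
        (Set.Icc ((p.1 : ℝ) * δ) (((p.1 : ℝ) + 1) * δ) ×ˢ
          Set.Icc ((p.2 : ℝ) * δ) (((p.2 : ℝ) + 1) * δ))).Nonempty}.Finite ∧
    (meshCountδ {p : ℝ × ℝ | p.1 ∈ Set.Icc (0 : ℝ) 1 ∧ p.2 = x p.1} δ : ℝ)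
      ≤ 4 * (4 * C + 7) * (4 * q)^k := by
  have hB : (0:ℝ) < 2^k := by positivity
  have hδ : 0 < δ := lt_trans (by positivity) hδ0
  have hinv : 1 / δ < 2 * 2^k := by
    rw [div_lt_iff₀ hδ]
    rw [div_lt_iff₀ (by positivity), pow_succ] at hδ0
    linarith
  set L : ℤ := ⌈C * q^k / δ⌉ + 1 with hL
  set tm : ℤ → ℝ := fun m => max 0 (min 1 (m * δ)) with htm
  set T : Finset (ℤ × ℤ) := (Finset.Icc (-1:ℤ) (2^(k+1))).biUnion
    (fun m => ({m} : Finset ℤ) ×ˢ Finset.Icc (⌊x (tm m) / δ⌋ - L) (⌊x (tm m) / δ⌋ + L)) with hT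
  have hLpos : 0 ≤ L := by
    have : 0 ≤ ⌈C * q^k / δ⌉ := Int.ceil_nonneg (by positivity)
    omega
  set S := {p : ℤ × ℤ | ({p : ℝ × ℝ | p.1 ∈ Set.Icc (0 : ℝ) 1 ∧ p.2 = x p.1} ∩
        (Set.Icc ((p.1 : ℝ) * δ) (((p.1 : ℝ) + 1) * δ) ×ˢ
          Set.Icc ((p.2 : ℝ) * δ) (((p.2 : ℝ) + 1) * δ))).Nonempty} with hS
  have hsub : S ⊆ (T : Set (ℤ × ℤ)) := by
    rintro ⟨m, n⟩ ⟨⟨t, y⟩, ⟨ht, hy⟩, ⟨ht1, ht2⟩, ⟨hy1, hy2⟩⟩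
    simp only at ht hy ht1 ht2 hy1 hy2
    subst hy
    have htm1 : tm m ∈ Set.Icc (0:ℝ) 1 := by
      simp only [htm, Set.mem_Icc]
      exact ⟨le_max_left _ _, max_le (by norm_num) (min_le_left _ _)⟩
    have hd : |tm m - t| ≤ 1/2^k := by
      have h3 : tm m ≤ t := max_le ht.1 ((min_le_right _ _).trans ht1)
      have h4 : t - δ ≤ tm m := by
        apply le_max_of_le_right
        apply le_min <;> linarith [ht.2]
      rw [abs_le]; constructor <;> linarith
    have hv := hH k _ _ htm1 ht hd
    rw [hT]
    simp only [Finset.coe_biUnion, Set.mem_iUnion, Finset.mem_coe, Finset.mem_product,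
      Finset.mem_singleton, Finset.mem_Icc]
    refine ⟨m, ⟨?_, ?_⟩, rfl, ?_, ?_⟩
    · have : (0:ℝ) ≤ m + 1 := by
        by_contra h
        push Not at h
        nlinarith [ht.1]
      have : (0:ℤ) ≤ m + 1 := by exact_mod_cast this
      omega
    · have : (m:ℝ) ≤ 2^(k+1) := by
        have : (m:ℝ) ≤ 1/δ := by rw [le_div_iff₀ hδ]; linarith [ht.2]
        rw [pow_succ]; linarith
      exact_mod_cast this
    · have h5 : x (tm m) / δ ≤ n + 1 + C * q^k/δ := by
        have h7 : x (tm m) ≤ (n + 1) * δ + C * q^k := by linarith [(abs_le.1 hv).2]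
        calc x (tm m) / δ ≤ ((n + 1) * δ + C * q^k) / δ := by gcongr
          _ = _ := by field_simp
      have h6 : ((⌊x (tm m) / δ⌋ : ℤ) : ℝ) ≤ ((n + L : ℤ) : ℝ) := by
        rw [hL]; push_cast
        linarith [Int.floor_le (x (tm m) / δ), Int.le_ceil (C * q^k/δ)]
      have h8 : ⌊x (tm m) / δ⌋ ≤ n + L := by exact_mod_cast h6
      omega
    · have h5 : (n:ℝ) ≤ x (tm m) / δ + C * q^k/δ := by
        have h7 : n * δ ≤ x (tm m) + C * q^k := by linarith [(abs_le.1 hv).1]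
        calc (n:ℝ) = n * δ / δ := by field_simp
          _ ≤ (x (tm m) + C * q^k) / δ := by gcongr
          _ = _ := by rw [add_div]
      have h6 : (n:ℝ) ≤ ((⌊x (tm m) / δ⌋ + L : ℤ) : ℝ) := by
        rw [hL]; push_cast
        linarith [Int.lt_floor_add_one (x (tm m) / δ), Int.le_ceil (C * q^k/δ)]
      exact_mod_cast h6
  have hfin : S.Finite := T.finite_toSet.subset hsub
  refine ⟨hfin, ?_⟩
  have hcard : meshCountδ {p : ℝ × ℝ | p.1 ∈ Set.Icc (0 : ℝ) 1 ∧ p.2 = x p.1} δ ≤ T.card := by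
    unfold meshCountδ
    rw [← hS]
    have := Set.ncard_le_ncard hsub T.finite_toSet
    rwa [Set.ncard_coe_finset] at this
  have hcardT : T.card ≤ (2^(k+1) + 2) * (2 * L + 1).toNat := by
    refine (Finset.card_biUnion_le_card_mul _ _ (2 * L + 1).toNat ?_).trans ?_
    · intro m _
      rw [Finset.card_product, Int.card_Icc]
      rw [Finset.card_singleton, one_mul]
      apply le_of_eq
      congr 1
      ring
    · apply Nat.mul_le_mul_right
      rw [Int.card_Icc]
      have : (2:ℤ)^(k+1) = ((2^(k+1) : ℕ) : ℤ) := by push_cast; rfl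
      rw [this]
      generalize 2^(k+1) = w
      omega
  have hLr : (L:ℝ) ≤ C * q^k / δ + 2 := by
    rw [hL]; push_cast
    linarith [Int.ceil_lt_add_one (C * q^k/δ)]
  have hLt : (((2 * L + 1).toNat : ℕ) : ℝ) = 2 * L + 1 := by
    have : (((2 * L + 1).toNat : ℕ) : ℤ) = 2 * L + 1 := Int.toNat_of_nonneg (by omega)
    exact_mod_cast this
  have h1B : (1:ℝ) ≤ 2^k := one_le_pow₀ (by norm_num)
  have h1q : (1:ℝ) ≤ (2*q)^k := one_le_pow₀ (by linarith)
  have : C * q^k/δ ≤ 2 * C * (2*q)^k := by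
    have : C * q^k/δ = C * q^k * (1/δ) := by ring
    rw [this, mul_pow]
    have : 0 < C * q^k := by positivity
    nlinarith
  calc (meshCountδ {p : ℝ × ℝ | p.1 ∈ Set.Icc (0 : ℝ) 1 ∧ p.2 = x p.1} δ : ℝ)
      ≤ (((2^(k+1) + 2) * (2 * L + 1).toNat : ℕ) : ℝ) := by exact_mod_cast hcard.trans hcardT
    _ = (2 * 2^k + 2) * (2 * L + 1) := by push_cast; rw [hLt, pow_succ]; ring
    _ ≤ (4 * 2^k) * ((4 * C + 7) * (2*q)^k) := by
      apply mul_le_mul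
      · linarith
      · linarith
      · have : (0:ℝ) ≤ L := by exact_mod_cast hLpos
        linarith
      · positivity
    _ = _ := by
      rw [show (4:ℝ) * q = 2 * (2 * q) by ring, mul_pow 2 (2*q)]
      ring

lemma count_lower (x : ℝ → ℝ) (hcont : ContinuousOn x (Set.Icc 0 1))
    (k : ℕ) (δ V : ℝ) (hδ : 0 < δ) (hδ1 : δ ≤ 1/2^k)
    (hfin : {p : ℤ × ℤ | ({p : ℝ × ℝ | p.1 ∈ Set.Icc (0 : ℝ) 1 ∧ p.2 = x p.1} ∩
        (Set.Icc ((p.1 : ℝ) * δ) (((p.1 : ℝ) + 1) * δ) ×ˢ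
          Set.Icc ((p.2 : ℝ) * δ) (((p.2 : ℝ) + 1) * δ))).Nonempty}.Finite)
    (hV : V ≤ ∑ i ∈ Finset.range (2^k), |x (((i+1 : ℕ) : ℝ) / 2^k) - x ((i:ℝ) / 2^k)|) :
    V * 2^k - 2^k ≤ 3 *
      (meshCountδ {p : ℝ × ℝ | p.1 ∈ Set.Icc (0 : ℝ) 1 ∧ p.2 = x p.1} δ : ℝ) := by
  have hB : (0:ℝ) < 2^k := by positivity
  set S := {p : ℤ × ℤ | ({p : ℝ × ℝ | p.1 ∈ Set.Icc (0 : ℝ) 1 ∧ p.2 = x p.1} ∩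
        (Set.Icc ((p.1 : ℝ) * δ) (((p.1 : ℝ) + 1) * δ) ×ˢ
          Set.Icc ((p.2 : ℝ) * δ) (((p.2 : ℝ) + 1) * δ))).Nonempty} with hS
  set u : ℕ → ℝ := fun i => x ((i:ℝ) / 2^k) with hu
  set R : ℕ → Finset ℤ := fun i =>
    Finset.Icc ⌈min (u i) (u (i+1)) / δ⌉ ⌊max (u i) (u (i+1)) / δ⌋ with hR
  set T : Finset (Σ _ : ℕ, ℤ) := (Finset.range (2^k)).sigma R with hT
  have hex : ∀ p : (Σ _ : ℕ, ℤ), ∃ t : ℝ, p ∈ T →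
      (t ∈ Set.Icc ((p.1:ℝ) / 2^k) (((p.1 + 1 : ℕ) : ℝ) / 2^k) ∧ t ∈ Set.Icc (0:ℝ) 1 ∧
        x t = p.2 * δ) := by
    rintro ⟨i, n⟩
    by_cases hp : (⟨i, n⟩ : Σ _ : ℕ, ℤ) ∈ T
    swap
    · exact ⟨0, fun h => absurd h hp⟩
    simp only [hT, hR, Finset.mem_sigma, Finset.mem_range, Finset.mem_Icc, Int.ceil_le,
      Int.le_floor] at hp
    obtain ⟨hi, hn1, hn2⟩ := hp
    rw [div_le_iff₀ hδ] at hn1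
    rw [le_div_iff₀ hδ] at hn2
    have hi' : ((i+1 : ℕ):ℝ) ≤ 2^k := by exact_mod_cast hi
    have hle : (i:ℝ) / 2^k ≤ ((i+1:ℕ):ℝ) / 2^k := by gcongr; omega
    have hss : Set.Icc ((i:ℝ)/2^k) (((i+1:ℕ):ℝ)/2^k) ⊆ Set.Icc (0:ℝ) 1 := by
      apply Set.Icc_subset_Icc
      · positivity
      · rwa [div_le_one hB]
    have hivt := intermediate_value_uIcc (a := (i:ℝ)/2^k) (b := ((i+1:ℕ):ℝ)/2^k) (f := x)
      (by rw [Set.uIcc_of_le hle]; exact hcont.mono hss)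
    obtain ⟨t, ht, htx⟩ := hivt (show (n:ℝ) * δ ∈ Set.uIcc _ _ from ⟨hn1, hn2⟩)
    rw [Set.uIcc_of_le hle] at ht
    exact ⟨t, fun _ => ⟨ht, hss ht, htx⟩⟩
  choose τ hτ using hex
  set g : (Σ _ : ℕ, ℤ) → ℤ × ℤ := fun p => (⌊τ p / δ⌋, p.2) with hg
  have himg : ((T.image g : Finset (ℤ × ℤ)) : Set (ℤ × ℤ)) ⊆ S := by
    intro z hz
    rw [Finset.mem_coe, Finset.mem_image] at hz
    obtain ⟨p, hp, rfl⟩ := hz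
    obtain ⟨_, h2, h3⟩ := hτ p hp
    refine ⟨(τ p, x (τ p)), ⟨h2, rfl⟩, ⟨?_, ?_⟩, ⟨?_, ?_⟩⟩
    · simp only [hg]
      rw [← le_div_iff₀ hδ]; exact Int.floor_le _
    · simp only [hg]
      rw [← div_le_iff₀ hδ]; exact (Int.lt_floor_add_one _).le
    · simp only [hg]; linarith
    · simp only [hg]; linarith
  have hfib : ∀ z ∈ T.image g, (T.filter (fun p => g p = z)).card ≤ 3 := by
    rintro ⟨m, n⟩ _
    have : (T.filter (fun p => g p = (m,n))).card ≤
        (Finset.Icc ⌈(m:ℝ) * δ * 2^k - 1⌉ ⌊(m:ℝ) * δ * 2^k + 1⌋).card := by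
      apply Finset.card_le_card_of_injOn (fun p => (p.1 : ℤ))
      · intro p hp
        rw [Finset.mem_coe, Finset.mem_filter] at hp
        obtain ⟨hpT, hpg⟩ := hp
        obtain ⟨⟨h1, h1'⟩, _, _⟩ := hτ p hpT
        have hm : ⌊τ p / δ⌋ = m := congrArg Prod.fst hpg
        rw [Int.floor_eq_iff, le_div_iff₀ hδ, div_lt_iff₀ hδ] at hm
        rw [div_le_iff₀ hB] at h1
        rw [le_div_iff₀ hB] at h1'
        push_cast at h1'
        have hδB : δ * 2^k ≤ 1 := by rwa [le_div_iff₀ hB] at hδ1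
        have e1 := mul_le_mul_of_nonneg_right hm.1 hB.le
        have e2 := mul_le_mul_of_nonneg_right hm.2.le hB.le
        rw [Finset.mem_coe, Finset.mem_Icc, Int.ceil_le, Int.le_floor]
        push_cast
        constructor <;> nlinarith
      · rintro ⟨i, n1⟩ hp ⟨i', n2⟩ hp' heq
        rw [Finset.mem_coe, Finset.mem_filter] at hp hp'
        have a1 : n1 = n := congrArg Prod.snd hp.2
        have a2 : n2 = n := congrArg Prod.snd hp'.2
        have : i = i' := by simpa using heq
        subst this; subst a1; subst a2; rfl
    refine this.trans ?_
    rw [Int.card_Icc]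
    have b1 := Int.floor_le ((m:ℝ) * δ * 2^k + 1)
    have b2 := Int.le_ceil ((m:ℝ) * δ * 2^k - 1)
    have : ((⌊(m:ℝ) * δ * 2^k + 1⌋ : ℤ):ℝ) ≤ ((⌈(m:ℝ) * δ * 2^k - 1⌉ + 2 : ℤ) : ℝ) := by
      push_cast; linarith
    have : ⌊(m:ℝ) * δ * 2^k + 1⌋ ≤ ⌈(m:ℝ) * δ * 2^k - 1⌉ + 2 := by exact_mod_cast this
    omega
  have hTc := Finset.card_le_mul_card_image T 3 hfib
  have himc : (T.image g).card ≤
      meshCountδ {p : ℝ × ℝ | p.1 ∈ Set.Icc (0 : ℝ) 1 ∧ p.2 = x p.1} δ := by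
    unfold meshCountδ
    rw [← hS]
    have := Set.ncard_le_ncard himg hfin
    rwa [Set.ncard_coe_finset] at this
  have hTlow : V * 2^k - 2^k ≤ T.card := by
    have hRc : ∀ i, |u (i+1) - u i| * 2^k - 1 ≤ (R i).card := by
      intro i
      simp only [hR]
      rw [Int.card_Icc]
      have h1 : ((⌊max (u i) (u (i+1)) / δ⌋ + 1 - ⌈min (u i) (u (i+1)) / δ⌉ : ℤ) : ℝ) ≤
          ((⌊max (u i) (u (i+1)) / δ⌋ + 1 - ⌈min (u i) (u (i+1)) / δ⌉).toNat : ℝ) := by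
        exact_mod_cast Int.self_le_toNat _
      refine le_trans ?_ h1
      push_cast
      have h2 := Int.lt_floor_add_one (max (u i) (u (i+1)) / δ)
      have h3 := Int.ceil_lt_add_one (min (u i) (u (i+1)) / δ)
      have h4 : |u (i+1) - u i| = max (u i) (u (i+1)) - min (u i) (u (i+1)) := by
        rw [max_sub_min_eq_abs]
      have h5 : |u (i+1) - u i| * 2^k ≤ |u (i+1) - u i| / δ := by
        rw [le_div_iff₀ hδ, mul_assoc]
        have hδB : 2^k * δ ≤ 1 := by rw [mul_comm]; rwa [le_div_iff₀ hB] at hδ1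
        exact mul_le_of_le_one_right (abs_nonneg _) hδB
      have h6 : |u (i+1) - u i| / δ = max (u i) (u (i+1)) / δ - min (u i) (u (i+1)) / δ := by
        rw [h4, sub_div]
      linarith
    have : (T.card : ℝ) = ∑ i ∈ Finset.range (2^k), ((R i).card : ℝ) := by
      rw [hT, Finset.card_sigma]; push_cast; rfl
    rw [this]
    calc V * 2^k - 2^k ≤ (∑ i ∈ Finset.range (2^k), |u (i+1) - u i|) * 2^k - 2^k := by
          gcongr
      _ = ∑ i ∈ Finset.range (2^k), (|u (i+1) - u i| * 2^k - 1) := by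
          rw [Finset.sum_sub_distrib, Finset.sum_mul]; simp
      _ ≤ _ := Finset.sum_le_sum (fun i _ => hRc i)
  have : (T.card : ℝ) ≤ 3 *
      (meshCountδ {p : ℝ × ℝ | p.1 ∈ Set.Icc (0 : ℝ) 1 ∧ p.2 = x p.1} δ : ℝ) := by
    have := hTc.trans (Nat.mul_le_mul_left 3 himc)
    exact_mod_cast this
  linarith

lemma holder_cont (x : ℝ → ℝ) (C q : ℝ) (hq0 : 0 < q) (hq1 : q < 1)
    (hH : ∀ (k : ℕ) (s t : ℝ), s ∈ Set.Icc (0:ℝ) 1 → t ∈ Set.Icc (0:ℝ) 1 →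
      |s - t| ≤ 1/2^k → |x s - x t| ≤ C * q^k) : ContinuousOn x (Set.Icc 0 1) := by
  rw [Metric.continuousOn_iff]
  intro t ht ε hε
  have h0 : Tendsto (fun k : ℕ => C * q^k) atTop (nhds 0) := by
    simpa using (tendsto_pow_atTop_nhds_zero_of_lt_one hq0.le hq1).const_mul C
  obtain ⟨k, hk⟩ := (h0.eventually (gt_mem_nhds hε)).exists
  refine ⟨1/2^k, by positivity, fun s hs hst => ?_⟩
  rw [Real.dist_eq] at *
  exact (hH k s t hs ht hst.le).trans_lt hk

lemma main_dim (x : ℝ → ℝ) (C q c : ℝ) (hC : 0 < C) (hq : 1/2 < q) (hq1 : q < 1) (hc : 0 < c)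
    (hH : ∀ (k : ℕ) (s t : ℝ), s ∈ Set.Icc (0:ℝ) 1 → t ∈ Set.Icc (0:ℝ) 1 →
      |s - t| ≤ 1/2^k → |x s - x t| ≤ C * q^k)
    (hV : ∀ k : ℕ, 1 ≤ k → c * (2*q)^k ≤
      ∑ i ∈ Finset.range (2^k), |x (((i+1 : ℕ) : ℝ) / 2^k) - x ((i:ℝ) / 2^k)|) :
    Tendsto (fun δ : ℝ =>
          Real.log (meshCountδ {p : ℝ × ℝ | p.1 ∈ Set.Icc (0 : ℝ) 1 ∧ p.2 = x p.1} δ) /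
            (-Real.log δ))
        (nhdsWithin 0 (Set.Ioi 0)) (nhds (Real.log (4 * q) / Real.log 2)) := by
  have hcont := holder_cont x C q (by linarith) hq1 hH
  have hl2 : 0 < Real.log 2 := Real.log_pos (by norm_num)
  have hA : 0 < Real.log (4*q) := Real.log_pos (by linarith)
  set A := Real.log (4*q) with hAdef
  have hr : Tendsto (fun k : ℕ => c * (2*q)^k) atTop atTop :=
    (tendsto_pow_atTop_atTop_of_one_lt (by linarith)).const_mul_atTop hc
  obtain ⟨K, hK⟩ := eventually_atTop.1 ((hr.eventually_ge_atTop 2).and (eventually_ge_atTop 1))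
  set K2 : ℝ := 4 * (4 * C + 7) with hK2
  have hK2p : 0 < K2 := by positivity
  have hell : Tendsto (fun δ : ℝ => -Real.log δ) (nhdsWithin 0 (Set.Ioi 0)) atTop :=
    tendsto_neg_atBot_atTop.comp Real.tendsto_log_nhdsGT_zero
  have key : ∀ᶠ δ in nhdsWithin (0:ℝ) (Set.Ioi 0),
      (A / Real.log 2 + (Real.log (c/6) - A) / (-Real.log δ) ≤
        Real.log (meshCountδ {p : ℝ × ℝ | p.1 ∈ Set.Icc (0 : ℝ) 1 ∧ p.2 = x p.1} δ) /
            (-Real.log δ)) ∧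
      (Real.log (meshCountδ {p : ℝ × ℝ | p.1 ∈ Set.Icc (0 : ℝ) 1 ∧ p.2 = x p.1} δ) /
            (-Real.log δ) ≤ A / Real.log 2 + Real.log K2 / (-Real.log δ)) := by
    have hmem : Set.Ioo (0:ℝ) (1/2^K) ∈ nhdsWithin (0:ℝ) (Set.Ioi 0) :=
      Ioo_mem_nhdsGT (by positivity)
    filter_upwards [hmem, hell.eventually_gt_atTop 0] with δ hδ hlδ
    obtain ⟨hδ0, hδK⟩ := hδ
    have hKinv : (2:ℝ)^K < 1/δ := by
      rw [lt_div_iff₀ hδ0]; rw [lt_div_iff₀ (by positivity)] at hδK; linarith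
    have h1K : (1:ℝ) ≤ 2^K := one_le_pow₀ (by norm_num)
    obtain ⟨k, hk1, hk2⟩ := exists_nat_pow_near (x := 1/δ) (y := (2:ℝ)) (by linarith)
      (by norm_num)
    have hkK : K ≤ k := by
      have := (pow_lt_pow_iff_right₀ (by norm_num : (1:ℝ) < 2)).1 (hKinv.trans hk2)
      omega
    obtain ⟨hk3, hk4⟩ := hK k hkK
    have d1 : δ ≤ 1/2^k := by
      rw [le_div_iff₀ (by positivity)]; rw [le_div_iff₀ hδ0] at hk1; linarith
    have d0 : 1/2^(k+1) < δ := by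
      rw [div_lt_iff₀ (by positivity)]; rw [div_lt_iff₀ hδ0] at hk2; linarith
    obtain ⟨hfin, hup⟩ := count_upper x C q hC hq hH k δ d0 d1
    have hlow := count_lower x hcont k δ _ hδ0 d1 hfin (hV k hk4)
    set N : ℝ := (meshCountδ {p : ℝ × ℝ | p.1 ∈ Set.Icc (0 : ℝ) 1 ∧ p.2 = x p.1} δ : ℝ) with hN
    have hlow' : c/6 * (4*q)^k ≤ N := by
      have e : (4*q)^k = (2*q)^k * 2^k := by rw [← mul_pow]; ring
      have : 2 * 2^k ≤ c * (2*q)^k * 2^k := by gcongr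
      rw [e]; linarith
    have hqk : 0 < (4*q)^k := by positivity
    have hNpos : 0 < N := lt_of_lt_of_le (by positivity) hlow'
    have l1 : Real.log (c/6) + k * A ≤ Real.log N := by
      have := Real.log_le_log (by positivity) hlow'
      rwa [Real.log_mul (by positivity) hqk.ne', Real.log_pow] at this
    have l2 : Real.log N ≤ Real.log K2 + k * A := by
      have := Real.log_le_log hNpos hup
      rwa [Real.log_mul hK2p.ne' hqk.ne', Real.log_pow] at this
    have m1 : k * Real.log 2 ≤ -Real.log δ := by
      have := Real.log_le_log (by positivity) hk1
      rwa [Real.log_pow, one_div, Real.log_inv] at this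
    have m2 : -Real.log δ ≤ (k+1) * Real.log 2 := by
      have := Real.log_le_log (by positivity) hk2.le
      rw [Real.log_pow, one_div, Real.log_inv] at this
      push_cast at this; exact this
    set ℓ := -Real.log δ
    have m1' : k * A ≤ A / Real.log 2 * ℓ := by
      rw [div_mul_eq_mul_div, le_div_iff₀ hl2]; nlinarith
    have m2' : A / Real.log 2 * ℓ ≤ (k+1) * A := by
      rw [div_mul_eq_mul_div, div_le_iff₀ hl2]; nlinarith
    constructor
    · rw [le_div_iff₀ hlδ, add_mul, div_mul_cancel₀ _ hlδ.ne']; linarith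
    · rw [div_le_iff₀ hlδ, add_mul, div_mul_cancel₀ _ hlδ.ne']; linarith
  have lim : ∀ B : ℝ, Tendsto (fun δ : ℝ => A / Real.log 2 + B / (-Real.log δ))
      (nhdsWithin 0 (Set.Ioi 0)) (nhds (A / Real.log 2)) := by
    intro B
    simpa using (hell.const_div_atTop B).const_add (A / Real.log 2)
  exact tendsto_of_tendsto_of_tendsto_of_le_of_le' (lim _) (lim _)
    (key.mono fun _ h => h.1) (key.mono fun _ h => h.2)

lemma pair_sum (b : ℕ → ℝ) (c : ℝ) (h : ∀ i, c ≤ b (2*i) + b (2*i+1)) (n : ℕ) :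
    n * c ≤ ∑ i ∈ Finset.range (2*n), b i := by
  induction n with
  | zero => simp
  | succ n ih =>
    rw [show 2 * (n+1) = 2*n+1+1 by ring, Finset.sum_range_succ, Finset.sum_range_succ]
    push_cast
    linarith [h n]

lemma dim_of_coef (a : ℕ → ℕ → ℝ) (q c : ℝ) (hq : 1/2 < q) (hq1 : q < 1) (hc : 0 < c)
    (h1 : ∀ k i, a (k+1) (2*i) + a (k+1) (2*i+1) = a k i)
    (h2 : ∀ k i, |a k i| ≤ q^k)
    (h3 : ∀ k i, c * q^(k+1) ≤ |a (k+1) (2*i)| + |a (k+1) (2*i+1)|) (x : ℝ → ℝ)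
    (hx : TendstoUniformlyOn (fun k => gfun a k) x atTop (Set.Icc (0:ℝ) 1)) :
    Tendsto (fun δ : ℝ =>
          Real.log (meshCountδ {p : ℝ × ℝ | p.1 ∈ Set.Icc (0 : ℝ) 1 ∧ p.2 = x p.1} δ) /
            (-Real.log δ))
        (nhdsWithin 0 (Set.Ioi 0)) (nhds (Real.log (4 * q) / Real.log 2)) := by
  have hq0 : 0 < q := by linarith
  have h1q : 0 < 1 - q := by linarith
  refine main_dim x (2/(1-q)+1) q (c/2) (by positivity) hq hq1 (by positivity)
    (lim_holder a q hq0 hq1 h1 h2 x hx) ?_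
  intro k hk
  obtain ⟨k, rfl⟩ := Nat.exists_eq_add_of_le' hk
  have e : ∀ i ∈ Finset.range (2^(k+1)),
      |x (((i+1 : ℕ) : ℝ) / 2^(k+1)) - x ((i:ℝ) / 2^(k+1))| = |a (k+1) i| := by
    intro i hi
    rw [Finset.mem_range] at hi
    rw [lim_dyadic a q hq0 hq1 h1 h2 x hx (k+1) (i+1) hi,
      lim_dyadic a q hq0 hq1 h1 h2 x hx (k+1) i hi.le, psum_succ]
    simp
  rw [Finset.sum_congr rfl e]
  have := pair_sum (fun i => |a (k+1) i|) (c * q^(k+1)) (h3 k) (2^k)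
  rw [show 2^(k+1) = 2 * 2^k by ring]
  refine le_trans (le_of_eq ?_) this
  push_cast
  rw [mul_pow, pow_succ 2]; ring

lemma angle_children (α : ℝ) (k i : ℕ) : ∃ s : ℝ, (s = α ∨ s = -α) ∧
    dragonAngle α (k+1) (2*i) = dragonAngle α k i + s ∧
    dragonAngle α (k+1) (2*i+1) = dragonAngle α k i - s := by
  have e1 : 2 * i / 2 = i := by omega
  have e2 : (2 * i + 1) / 2 = i := by omega
  have e3 : 2 * i % 2 = 0 := by omega
  have e4 : (2 * i + 1) % 2 = 1 := by omega
  simp only [dragonAngle, e1, e2, e3, e4]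
  rcases Nat.mod_two_eq_zero_or_one i with h | h
  · exact ⟨α, by simp [h, sub_eq_add_neg]⟩
  · exact ⟨-α, by simp [h]⟩

/-- If `w² + z² = 1` and `u+v`, `u-v` are `2 w cos`, `2 z sin` in absolute value. -/
lemma pair_bound (u v w z ca sa : ℝ) (hca : 0 < ca) (hca1 : ca ≤ 1) (hsa : 0 < sa) (hsa1 : sa ≤ 1)
    (hwz : w^2 + z^2 = 1) (h1 : |u + v| = 2 * |w| * ca) (h2 : |u - v| = 2 * |z| * sa) :
    sa * ca ≤ |u| + |v| := by
  have a1 : |u + v| ≤ |u| + |v| := abs_add_le u v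
  have a2 : |u - v| ≤ |u| + |v| := abs_sub u v
  have hw : |w| ≤ 1 := by rw [abs_le]; constructor <;> nlinarith [sq_nonneg z]
  have hz : |z| ≤ 1 := by rw [abs_le]; constructor <;> nlinarith [sq_nonneg w]
  have hw2 : w^2 ≤ |w| := by rw [← sq_abs]; nlinarith [abs_nonneg w]
  have hz2 : z^2 ≤ |z| := by rw [← sq_abs]; nlinarith [abs_nonneg z]
  have b1 : |w| * (sa * ca) ≤ |w| * ca := by
    apply mul_le_mul_of_nonneg_left _ (abs_nonneg _); nlinarith
  have b2 : |z| * (sa * ca) ≤ |z| * sa := by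
    apply mul_le_mul_of_nonneg_left _ (abs_nonneg _); nlinarith
  have : 0 < sa * ca := by positivity
  nlinarith

theorem stmt17 (θ : ℝ) (hθ0 : π / 3 < θ) (hθ1 : θ < π)
    (xθ yθ : ℝ → ℝ)
    (hx : TendstoUniformlyOn (fun k => xfun ((π - θ) / 2) k) xθ Filter.atTop (Set.Icc (0 : ℝ) 1))
    (hy : TendstoUniformlyOn (fun k => yfun ((π - θ) / 2) k) yθ Filter.atTop (Set.Icc (0 : ℝ) 1)) :
    Filter.Tendsto
        (fun δ : ℝ =>
          Real.log (meshCountδ {p : ℝ × ℝ | p.1 ∈ Set.Icc (0 : ℝ) 1 ∧ p.2 = xθ p.1} δ) /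
            (-Real.log δ))
        (nhdsWithin 0 (Set.Ioi 0))
        (nhds (1 - Real.log (Real.cos ((π - θ) / 2)) / Real.log 2)) ∧
    Filter.Tendsto
        (fun δ : ℝ =>
          Real.log (meshCountδ {p : ℝ × ℝ | p.1 ∈ Set.Icc (0 : ℝ) 1 ∧ p.2 = yθ p.1} δ) /
            (-Real.log δ))
        (nhdsWithin 0 (Set.Ioi 0))
        (nhds (1 - Real.log (Real.cos ((π - θ) / 2)) / Real.log 2)) := by
  have hα0 : 0 < (π - θ) / 2 := by linarith
  have hα1 : (π - θ) / 2 < π / 3 := by linarith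
  generalize (π - θ) / 2 = α at *
  have hpi := Real.pi_pos
  have hs : 0 < Real.sin α := Real.sin_pos_of_pos_of_lt_pi hα0 (by linarith)
  have hs1 := Real.sin_le_one α
  have hc1 : Real.cos α < 1 := by
    have := Real.cos_lt_cos_of_nonneg_of_le_pi le_rfl (by linarith : α ≤ π) hα0
    simpa using this
  have hc2 : 1/2 < Real.cos α := by
    have := Real.cos_lt_cos_of_nonneg_of_le_pi hα0.le (by linarith : π/3 ≤ π) hα1
    rwa [Real.cos_pi_div_three] at this
  have hc : 0 < Real.cos α := by linarith
  set q : ℝ := 1 / (2 * Real.cos α) with hqdef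
  have hq : 1/2 < q := by rw [hqdef]; gcongr; linarith
  have hq1 : q < 1 := by rw [hqdef, div_lt_one (by positivity)]; linarith
  have hl2 : 0 < Real.log 2 := Real.log_pos (by norm_num)
  have hD : 1 - Real.log (Real.cos α) / Real.log 2 = Real.log (4 * q) / Real.log 2 := by
    have : 4 * q = 2 / Real.cos α := by rw [hqdef]; field_simp; norm_num
    rw [this, Real.log_div (by norm_num) hc.ne', sub_div, div_self hl2.ne']
  have hf : ∀ k i, fcoef α k i = Real.cos (dragonAngle α k i) * q^k := by
    intro k i; rw [fcoef, hqdef, one_div, inv_pow, div_eq_mul_inv]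
  have hg : ∀ k i, gcoef α k i = Real.sin (dragonAngle α k i) * q^k := by
    intro k i; rw [gcoef, hqdef, one_div, inv_pow, div_eq_mul_inv]
  have hq0 : 0 < q := by linarith
  have hqc : 2 * Real.cos α * q = 1 := by rw [hqdef]; field_simp
  have hcs : ∀ s : ℝ, (s = α ∨ s = -α) → Real.cos s = Real.cos α ∧ |Real.sin s| = Real.sin α := by
    rintro s (rfl | rfl)
    · exact ⟨rfl, abs_of_pos hs⟩
    · rw [Real.cos_neg, Real.sin_neg, abs_neg]; exact ⟨rfl, abs_of_pos hs⟩
  rw [hD]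
  constructor
  · refine dim_of_coef (fcoef α) q (Real.sin α * Real.cos α) hq hq1 (by positivity) ?_ ?_ ?_ xθ hx
    · intro k i
      obtain ⟨s, hs', e1, e2⟩ := angle_children α k i
      rw [hf, hf, hf, e1, e2, Real.cos_add, Real.cos_sub, (hcs s hs').1, pow_succ]
      linear_combination Real.cos (dragonAngle α k i) * q^k * hqc
    · intro k i
      rw [hf, abs_mul, abs_of_pos (pow_pos hq0 k)]
      exact mul_le_of_le_one_left (by positivity) (Real.abs_cos_le_one _)
    · intro k i
      obtain ⟨s, hs', e1, e2⟩ := angle_children α k i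
      obtain ⟨i1, i2⟩ := hcs s hs'
      rw [hf, hf, abs_mul, abs_mul, abs_of_pos (pow_pos hq0 (k+1)), ← add_mul, e1, e2]
      gcongr
      apply pair_bound _ _ (Real.cos (dragonAngle α k i)) (Real.sin (dragonAngle α k i)) _ _ hc
        hc1.le hs hs1 (Real.cos_sq_add_sin_sq _)
      · rw [Real.cos_add, Real.cos_sub, i1, ← abs_of_pos hc, ← abs_two, ← abs_mul, ← abs_mul,
          abs_of_pos hc]
        congr 1; ring
      · rw [Real.cos_add, Real.cos_sub, ← i2, ← abs_two, ← abs_mul, ← abs_mul,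
          ← abs_neg]
        congr 1; ring
  · refine dim_of_coef (gcoef α) q (Real.sin α * Real.cos α) hq hq1 (by positivity) ?_ ?_ ?_ yθ hy
    · intro k i
      obtain ⟨s, hs', e1, e2⟩ := angle_children α k i
      rw [hg, hg, hg, e1, e2, Real.sin_add, Real.sin_sub, (hcs s hs').1, pow_succ]
      linear_combination Real.sin (dragonAngle α k i) * q^k * hqc
    · intro k i
      rw [hg, abs_mul, abs_of_pos (pow_pos hq0 k)]
      exact mul_le_of_le_one_left (by positivity) (Real.abs_sin_le_one _)
    · intro k i
      obtain ⟨s, hs', e1, e2⟩ := angle_children α k i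
      obtain ⟨i1, i2⟩ := hcs s hs'
      rw [hg, hg, abs_mul, abs_mul, abs_of_pos (pow_pos hq0 (k+1)), ← add_mul, e1, e2]
      gcongr
      apply pair_bound _ _ (Real.sin (dragonAngle α k i)) (Real.cos (dragonAngle α k i)) _ _ hc
        hc1.le hs hs1 (Real.sin_sq_add_cos_sq _)
      · rw [Real.sin_add, Real.sin_sub, i1, ← abs_of_pos hc, ← abs_two, ← abs_mul, ← abs_mul,
          abs_of_pos hc]
        congr 1; ring
      · rw [Real.sin_add, Real.sin_sub, ← i2, ← abs_two, ← abs_mul, ← abs_mul]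
        congr 1; ring
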